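/- Let ρ_ABC be a positive definite density matrix (positive definite with trace 1) on the tensor product of finite-dimensional complex Hilbert spaces H_A ⊗ H_B ⊗ H_C. Then for every α ∈ (1,∞), Tr{ ( ρ_AC^{(1−α)/(2α)} ρ_C^{(α−1)/(2α)} ρ_BC^{(1−α)/α} ρ_C^{(α−1)/(2α)} ρ_AC^{(1−α)/(2α)} )^{α/(1−α)} } ≤ 1. -/

import Mathlib

open scoped ComplexOrder Matrix

/-- Real power of a Hermitian matrix, taken on its support:
for `A = ∑ᵢ λᵢ |i⟩⟨i|`, `mpow A t = ∑_{i : λᵢ ≠ 0} λᵢ^t |i⟩⟨i|`.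
(For non-Hermitian input we return the junk value `0`.) -/
noncomputable def mpow {n : Type*} [Fintype n] [DecidableEq n]
    (A : Matrix n n ℂ) (t : ℝ) : Matrix n n ℂ :=
  if h : A.IsHermitian then
    (h.eigenvectorUnitary : Matrix n n ℂ) *
      Matrix.diagonal (fun i => ((if h.eigenvalues i = 0 then (0:ℝ)
        else (h.eigenvalues i) ^ t) : ℂ)) *
      (star h.eigenvectorUnitary : Matrix n n ℂ)
  else 0

/-- The reduced matrix `ρ_AC` of a tripartite matrix, viewed as the operator
`ρ_AC ⊗ I_B` on the full space. -/
noncomputable def redAC {dA dB dC : ℕ}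
    (ρ : Matrix (Fin dA × Fin dB × Fin dC) (Fin dA × Fin dB × Fin dC) ℂ) :
    Matrix (Fin dA × Fin dB × Fin dC) (Fin dA × Fin dB × Fin dC) ℂ :=
  fun x y => (if x.2.1 = y.2.1 then (1:ℂ) else 0) *
    ∑ m : Fin dB, ρ (x.1, m, x.2.2) (y.1, m, y.2.2)

/-- The reduced matrix `ρ_BC` of a tripartite matrix, viewed as the operator
`I_A ⊗ ρ_BC` on the full space. -/
noncomputable def redBC {dA dB dC : ℕ}
    (ρ : Matrix (Fin dA × Fin dB × Fin dC) (Fin dA × Fin dB × Fin dC) ℂ) :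
    Matrix (Fin dA × Fin dB × Fin dC) (Fin dA × Fin dB × Fin dC) ℂ :=
  fun x y => (if x.1 = y.1 then (1:ℂ) else 0) * ∑ m : Fin dA, ρ (m, x.2) (m, y.2)

/-- The reduced matrix `ρ_C` of a tripartite matrix, viewed as the operator
`I_A ⊗ I_B ⊗ ρ_C` on the full space. -/
noncomputable def redC {dA dB dC : ℕ}
    (ρ : Matrix (Fin dA × Fin dB × Fin dC) (Fin dA × Fin dB × Fin dC) ℂ) :
    Matrix (Fin dA × Fin dB × Fin dC) (Fin dA × Fin dB × Fin dC) ℂ :=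
  fun x y => (if x.1 = y.1 then (1:ℂ) else 0) * (if x.2.1 = y.2.1 then (1:ℂ) else 0) *
    ∑ m : Fin dA, ∑ l : Fin dB, ρ (m, l, x.2.2) (m, l, y.2.2)


open Matrix Kronecker

section helpers
variable {n : Type*} [Fintype n] [DecidableEq n]

/-- Complex power of a Hermitian matrix. -/
noncomputable def cp (A : Matrix n n ℂ) (h : A.IsHermitian) (z : ℂ) : Matrix n n ℂ :=
  (h.eigenvectorUnitary : Matrix n n ℂ) *
    Matrix.diagonal (fun i => Complex.exp (z * (Real.log (h.eigenvalues i) : ℂ))) *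
    (star h.eigenvectorUnitary : Matrix n n ℂ)

lemma cp_add (A : Matrix n n ℂ) (h : A.IsHermitian) (z w : ℂ) :
    cp A h (z + w) = cp A h z * cp A h w := by
  have hU : (star h.eigenvectorUnitary : Matrix n n ℂ) * (h.eigenvectorUnitary : Matrix n n ℂ) = 1 := by
    simp
  unfold cp
  have : Matrix.diagonal (fun i => Complex.exp ((z + w) * (Real.log (h.eigenvalues i) : ℂ)))
      = Matrix.diagonal (fun i => Complex.exp (z * (Real.log (h.eigenvalues i) : ℂ))) *
        Matrix.diagonal (fun i => Complex.exp (w * (Real.log (h.eigenvalues i) : ℂ))) := by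
    rw [Matrix.diagonal_mul_diagonal]
    congr 1; ext i
    rw [add_mul, Complex.exp_add]
  rw [this]
  generalize Matrix.diagonal (fun i => Complex.exp (z * (Real.log (h.eigenvalues i) : ℂ))) = D1
  generalize Matrix.diagonal (fun i => Complex.exp (w * (Real.log (h.eigenvalues i) : ℂ))) = D2
  calc _ = (h.eigenvectorUnitary : Matrix n n ℂ) * D1 * 1 * D2 * (star h.eigenvectorUnitary : Matrix n n ℂ) := by
        simp only [mul_one, Matrix.mul_assoc]
    _ = _ := by rw [← hU]; simp only [Matrix.mul_assoc]

lemma cp_zero (A : Matrix n n ℂ) (h : A.IsHermitian) : cp A h 0 = 1 := by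
  simp [cp]

lemma cp_neg_mul (A : Matrix n n ℂ) (h : A.IsHermitian) (z : ℂ) :
    cp A h (-z) * cp A h z = 1 := by
  rw [← cp_add, neg_add_cancel, cp_zero]

lemma cp_mul_neg (A : Matrix n n ℂ) (h : A.IsHermitian) (z : ℂ) :
    cp A h z * cp A h (-z) = 1 := by
  rw [← cp_add, add_neg_cancel, cp_zero]

lemma cp_star (A : Matrix n n ℂ) (h : A.IsHermitian) (z : ℂ) :
    (cp A h z)ᴴ = cp A h (star z) := by
  unfold cp
  rw [Matrix.conjTranspose_mul, Matrix.conjTranspose_mul, Matrix.diagonal_conjTranspose,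
    ← Matrix.star_eq_conjTranspose, ← Matrix.star_eq_conjTranspose]
  rw [Matrix.mul_assoc]
  have : (star fun i => Complex.exp (z * (Real.log (h.eigenvalues i) : ℂ))) =
      fun i => Complex.exp (star z * (Real.log (h.eigenvalues i) : ℂ)) := by
    ext i
    simp [← Complex.exp_conj]
  rw [this]
  simp

lemma cp_one (A : Matrix n n ℂ) (h : A.PosDef) : cp A h.1 1 = A := by
  conv_rhs => rw [h.1.spectral_theorem]
  rw [Unitary.conjStarAlgAut_apply]
  unfold cp
  congr 3
  ext i
  have := h.eigenvalues_pos i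
  simp [← Complex.ofReal_exp, Real.exp_log this]

lemma cfc_rpow_real (x : ℝ) (hx : 0 < x) (t : ℝ) : ((x : ℂ) ^ t : ℂ) = ((x ^ t : ℝ) : ℂ) := by
  have h := CFC.rpow_algebraMap (A := ℂ) (x := ⟨x, hx.le⟩) (y := t)
  exact h

lemma mpow_eq (A : Matrix n n ℂ) (h : A.PosDef) (t : ℝ) : mpow A t = cp A h.1 (t : ℂ) := by
  unfold mpow cp
  rw [dif_pos h.1]
  congr 3
  ext i
  have := h.eigenvalues_pos i
  rw [if_neg this.ne', cfc_rpow_real _ this, Real.rpow_def_of_pos this, mul_comm]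
  push_cast
  rfl

lemma trace_cp (A : Matrix n n ℂ) (h : A.IsHermitian) (z : ℂ) :
    (cp A h z).trace = ∑ i, Complex.exp (z * (Real.log (h.eigenvalues i) : ℂ)) := by
  unfold cp
  rw [Matrix.trace_mul_comm, ← Matrix.mul_assoc]
  simp [Matrix.trace]

lemma aeval_eq (A : Matrix n n ℂ) (h : A.IsHermitian) (p : Polynomial ℂ) :
    Polynomial.aeval A p = (h.eigenvectorUnitary : Matrix n n ℂ) *
      Matrix.diagonal (fun i => p.eval ((h.eigenvalues i : ℝ) : ℂ)) *
      (star h.eigenvectorUnitary : Matrix n n ℂ) := by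
  conv_lhs => rw [h.spectral_theorem]
  have := Polynomial.aeval_algHom_apply
    ((Unitary.conjStarAlgAut ℂ _ h.eigenvectorUnitary : Matrix n n ℂ ≃⋆ₐ[ℂ] Matrix n n ℂ).toAlgEquiv.toAlgHom)
    (diagonal (RCLike.ofReal ∘ h.eigenvalues)) p
  refine this.trans ?_
  have h2 := Polynomial.aeval_algHom_apply (Matrix.diagonalAlgHom ℂ : (n → ℂ) →ₐ[ℂ] Matrix n n ℂ)
    (RCLike.ofReal ∘ h.eigenvalues) p
  have h3 : (Polynomial.aeval ((RCLike.ofReal ∘ h.eigenvalues : n → ℂ))) p =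
    fun i => p.eval ((h.eigenvalues i : ℝ) : ℂ) := by
    ext i
    have := Polynomial.aeval_algHom_apply (Pi.evalAlgHom ℂ (fun _ : n => ℂ) i)
      (RCLike.ofReal ∘ h.eigenvalues) p
    simpa using this.symm
  rw [h3] at h2
  have h4 : (Polynomial.aeval (diagonal (RCLike.ofReal ∘ h.eigenvalues : n → ℂ))) p =
    diagonal (fun i => p.eval ((h.eigenvalues i : ℝ) : ℂ)) := h2
  rw [h4]
  exact Unitary.conjStarAlgAut_apply (S := ℂ) h.eigenvectorUnitary _

lemma exists_poly {m : Type*} [Fintype m] [DecidableEq m] (A : Matrix n n ℂ) (hA : A.IsHermitian)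
    (B : Matrix m m ℂ) (hB : B.IsHermitian) (z : ℂ) :
    ∃ p : Polynomial ℂ, cp A hA z = Polynomial.aeval A p ∧ cp B hB z = Polynomial.aeval B p := by
  classical
  let s : Finset ℂ := Finset.univ.image (fun i => ((hA.eigenvalues i : ℝ) : ℂ)) ∪
    Finset.univ.image (fun i => ((hB.eigenvalues i : ℝ) : ℂ))
  let r : ℂ → ℂ := fun x => Complex.exp (z * (Real.log x.re : ℂ))
  have key : ∀ x ∈ s, (Lagrange.interpolate s id r).eval x = r x := fun x hx =>
    Lagrange.eval_interpolate_at_node r (Function.injective_id.injOn) hx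
  refine ⟨Lagrange.interpolate s id r, ?_, ?_⟩
  · rw [aeval_eq A hA]
    unfold cp
    congr 3
    ext i
    rw [key _ (by simp [s])]
    simp [r]
  · rw [aeval_eq B hB]
    unfold cp
    congr 3
    ext i
    rw [key _ (by simp [s])]
    simp [r]

lemma cp_algHom {m : Type*} [Fintype m] [DecidableEq m] (A : Matrix n n ℂ) (hA : A.IsHermitian)
    (φ : Matrix n n ℂ →ₐ[ℂ] Matrix m m ℂ) (B : Matrix m m ℂ) (hB : B.IsHermitian) (hφ : φ A = B)
    (z : ℂ) : cp B hB z = φ (cp A hA z) := by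
  obtain ⟨p, h1, h2⟩ := exists_poly A hA B hB z
  rw [h1, h2, ← hφ, Polynomial.aeval_algHom_apply]

/-- Hilbert-Schmidt Cauchy-Schwarz. -/
lemma hs_cs (P Q : Matrix n n ℂ) :
    ‖(Pᴴ * Q).trace‖ ^ 2 ≤ (Pᴴ * P).trace.re * (Qᴴ * Q).trace.re := by
  have h0 : ∀ R : Matrix n n ℂ, (Rᴴ * R).trace.re = ∑ x : n × n, ‖R x.2 x.1‖ ^ 2 := by
    intro R
    simp only [Matrix.trace, Matrix.diag, Matrix.mul_apply, Matrix.conjTranspose_apply,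
      Complex.re_sum, Fintype.sum_prod_type]
    refine Finset.sum_congr rfl fun i _ => Finset.sum_congr rfl fun j _ => ?_
    rw [Complex.star_def, Complex.conj_mul']
    norm_cast
  have h1 : ‖(Pᴴ * Q).trace‖ ≤ ∑ x : n × n, ‖P x.2 x.1‖ * ‖Q x.2 x.1‖ := by
    simp only [Matrix.trace, Matrix.diag, Matrix.mul_apply, Matrix.conjTranspose_apply,
      Fintype.sum_prod_type]
    refine (norm_sum_le _ _).trans (Finset.sum_le_sum fun i _ => (norm_sum_le _ _).trans
      (Finset.sum_le_sum fun j _ => ?_))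
    simp
  rw [h0, h0]
  exact (pow_le_pow_left₀ (norm_nonneg _) h1 2).trans (Finset.sum_mul_sq_le_sq_mul_sq _ _ _)

/-- Entire functions bounded on the closed unit strip. -/
def Good (f : ℂ → ℂ) : Prop :=
  Differentiable ℂ f ∧ ∃ C : ℝ, ∀ z : ℂ, 0 ≤ z.re → z.re ≤ 1 → ‖f z‖ ≤ C

lemma Good.const (c : ℂ) : Good (fun _ => c) :=
  ⟨differentiable_const c, ‖c‖, fun _ _ _ => le_rfl⟩

lemma Good.mul {f g : ℂ → ℂ} (hf : Good f) (hg : Good g) : Good (fun z => f z * g z) := by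
  obtain ⟨hf, C, hC⟩ := hf
  obtain ⟨hg, D, hD⟩ := hg
  refine ⟨hf.mul hg, C * D, fun z h0 h1 => ?_⟩
  rw [norm_mul]
  exact mul_le_mul (hC z h0 h1) (hD z h0 h1) (norm_nonneg _) ((norm_nonneg _).trans (hC z h0 h1))

lemma Good.sum {ι : Type*} (s : Finset ι) {f : ι → ℂ → ℂ} (hf : ∀ i ∈ s, Good (f i)) :
    Good (fun z => ∑ i ∈ s, f i z) := by
  classical
  induction s using Finset.induction_on with
  | empty => simpa using Good.const 0
  | insert a s ha ih =>
    obtain ⟨h1, C, hC⟩ := hf a (by simp)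
    obtain ⟨h2, D, hD⟩ := ih (fun i hi => hf i (by simp [hi]))
    simp only [Finset.sum_insert ha]
    exact ⟨h1.add h2, C + D, fun z h0 h1 => (norm_add_le _ _).trans (add_le_add (hC z h0 h1) (hD z h0 h1))⟩

lemma Good.exp (a b l : ℝ) : Good (fun z => Complex.exp (((a : ℂ) + (b : ℂ) * z) * (l : ℂ))) := by
  refine ⟨by fun_prop, Real.exp (a * l + |b * l|), fun z h0 h1 => ?_⟩
  rw [Complex.norm_exp]
  apply Real.exp_le_exp.2
  have : (((a : ℂ) + (b : ℂ) * z) * (l : ℂ)).re = a * l + (b * l) * z.re := by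
    simp; ring
  rw [this]
  have := le_abs_self (b * l)
  have := abs_nonneg (b * l)
  nlinarith

/-- Entrywise good matrix functions. -/
def MGood (F : ℂ → Matrix n n ℂ) : Prop := ∀ i j, Good (fun z => F z i j)

lemma MGood.const (M : Matrix n n ℂ) : MGood (fun _ => M) := fun i j => Good.const _

lemma MGood.mul {F G : ℂ → Matrix n n ℂ} (hF : MGood F) (hG : MGood G) :
    MGood (fun z => F z * G z) := by
  intro i j
  simp only [Matrix.mul_apply]
  exact Good.sum _ fun k _ => (hF i k).mul (hG k j)

lemma MGood.trace {F : ℂ → Matrix n n ℂ} (hF : MGood F) : Good (fun z => (F z).trace) :=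
  Good.sum _ fun k _ => hF k k

lemma MGood.cp (A : Matrix n n ℂ) (h : A.IsHermitian) (a b : ℝ) :
    MGood (fun z => cp A h ((a : ℂ) + (b : ℂ) * z)) := by
  unfold _root_.cp
  refine MGood.mul (MGood.mul (MGood.const _) ?_) (MGood.const _)
  intro i j
  by_cases hij : i = j
  · subst hij
    simpa using Good.exp a b _
  · simpa [hij] using Good.const 0

/-- Abstract interpolation bound. -/
lemma interp_main [Nonempty n] (A B C : Matrix n n ℂ) (hA : A.PosDef) (hB : B.PosDef)
    (hC : C.PosDef)
    (htr : ∀ z : ℂ, z.re = 1 →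
      (A * cp C hC.1 (-(star z / 2)) * B * cp C hC.1 (-(z / 2))).trace = 1)
    (s : ℝ) (hs0 : 0 < s) (hs1 : s < 1) :
    (mpow (mpow A (-s/2) * mpow C (s/2) * mpow B (-s) * mpow C (s/2) * mpow A (-s/2))
      (-1/s)).trace ≤ 1 := by
  let G : ℂ → Matrix n n ℂ := fun z => cp B hB.1 (z/2) * cp C hC.1 (-(z/2)) * cp A hA.1 (z/2)
  let K : ℂ → Matrix n n ℂ := fun z => cp A hA.1 (-(z/2)) * cp C hC.1 (z/2) * cp B hB.1 (-(z/2))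
  have hGK : ∀ z, G z * K z = 1 := by
    intro z
    calc G z * K z = cp B hB.1 (z/2) * (cp C hC.1 (-(z/2)) * (cp A hA.1 (z/2) *
        cp A hA.1 (-(z/2))) * cp C hC.1 (z/2)) * cp B hB.1 (-(z/2)) := by
          simp only [G, K, Matrix.mul_assoc]
      _ = 1 := by simp only [cp_mul_neg, cp_neg_mul, mul_one]
  have hKG : ∀ z, K z * G z = 1 := fun z => mul_eq_one_comm.1 (hGK z)
  have hGs : ∀ z, (G z)ᴴ = cp A hA.1 (star z/2) * (cp C hC.1 (-(star z/2)) * cp B hB.1 (star z/2)) := by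
    intro z
    simp only [G, Matrix.conjTranspose_mul, cp_star]
    simp
  have hKs : ∀ z, (K z)ᴴ = cp B hB.1 (-(star z/2)) * (cp C hC.1 (star z/2) * cp A hA.1 (-(star z/2))) := by
    intro z
    simp only [K, Matrix.conjTranspose_mul, cp_star]
    simp
  have hss : star (s : ℂ) = s := by simp
  set X := mpow A (-s/2) * mpow C (s/2) * mpow B (-s) * mpow C (s/2) * mpow A (-s/2) with hXdef
  have hX : X = K s * (K s)ᴴ := by
    rw [hKs, hXdef, mpow_eq A hA, mpow_eq B hB, mpow_eq C hC, hss]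
    have e1 : ((-s/2 : ℝ) : ℂ) = -((s : ℂ)/2) := by push_cast; ring
    have e2 : ((s/2 : ℝ) : ℂ) = (s : ℂ)/2 := by push_cast; ring
    have e3 : ((-s : ℝ) : ℂ) = -((s : ℂ)/2) + -((s : ℂ)/2) := by push_cast; ring
    rw [e1, e2, e3, cp_add]
    simp only [K, Matrix.mul_assoc]
  have hXp : X.PosDef := by
    rw [hX]
    refine Matrix.PosDef.mul_conjTranspose_self _ ?_
    intro v w hvw
    have := congrArg (fun u => Matrix.vecMul u (G s)) hvw
    simpa [Matrix.vecMul_vecMul, hKG] using this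
  have hGG : (G s)ᴴ * G s = cp X hXp.1 (-1) := by
    have h1 : (G s)ᴴ * G s * X = 1 := by
      rw [hX]
      calc _ = (G s)ᴴ * (G s * K s) * (K s)ᴴ := by simp only [Matrix.mul_assoc]
        _ = 1 := by rw [hGK, mul_one, ← Matrix.conjTranspose_mul, hKG, Matrix.conjTranspose_one]
    have h2 : X * cp X hXp.1 (-1) = 1 := by
      conv_lhs => rw [show X * cp X hXp.1 (-1) = cp X hXp.1 1 * cp X hXp.1 (-1) by
        rw [cp_one X hXp]]
      exact cp_mul_neg _ _ _
    calc _ = (G s)ᴴ * G s * (X * cp X hXp.1 (-1)) := by rw [h2, mul_one]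
      _ = _ := by rw [← Matrix.mul_assoc, h1, one_mul]
  have hsne : (s : ℂ) ≠ 0 := by exact_mod_cast hs0.ne'
  rw [mpow_eq X hXp]
  obtain ⟨T, hT, hTpos⟩ : ∃ T : ℝ, (cp X hXp.1 ((-1/s : ℝ) : ℂ)).trace = T ∧ 0 < T := by
    refine ⟨∑ i, Real.exp ((-1/s) * Real.log (hXp.1.eigenvalues i)), ?_, ?_⟩
    · rw [trace_cp]; push_cast; rfl
    · exact Finset.sum_pos (fun i _ => Real.exp_pos _) Finset.univ_nonempty
  rw [hT]
  -- the interpolating function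
  let Z : ℂ → Matrix n n ℂ := fun z =>
    cp X hXp.1 (((1/2 - 1/s : ℝ) : ℂ) + ((1/(2*s) : ℝ) : ℂ) * z)
  let f : ℂ → ℂ := fun z => (Z z * (G s)ᴴ * G z).trace
  have hG : MGood G := by
    have h := ((MGood.cp B hB.1 0 (1/2)).mul (MGood.cp C hC.1 0 (-1/2))).mul (MGood.cp A hA.1 0 (1/2))
    convert h using 2 with z
    simp only [G]
    have e1 : z / 2 = ((0 : ℝ) : ℂ) + ((1/2 : ℝ) : ℂ) * z := by push_cast; ring
    have e2 : -(z / 2) = ((0 : ℝ) : ℂ) + ((-1/2 : ℝ) : ℂ) * z := by push_cast; ring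
    rw [e2, e1]
  have hf : Good f := (((MGood.cp X hXp.1 _ _).mul (MGood.const _)).mul hG).trace
  have hZs : ∀ z, (Z z)ᴴ = cp X hXp.1 (((1/2 - 1/s : ℝ) : ℂ) + ((1/(2*s) : ℝ) : ℂ) * star z) := by
    intro z
    simp only [Z, cp_star]
    congr 1
    simp only [star_add, star_mul', Complex.star_def, Complex.conj_ofReal]
  have hfs : f s = T := by
    simp only [f]
    rw [Matrix.mul_assoc, hGG, ← hT]
    simp only [Z]
    rw [← cp_add]
    congr 2
    push_cast
    field_simp
    ring
  have hzz : ∀ z : ℂ, star z = 2 * (z.re : ℂ) - z := by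
    intro z
    apply Complex.ext <;> simp; ring
  -- left edge
  have hl : ∀ z ∈ Complex.re ⁻¹' {(0:ℝ)}, ‖f z‖ ≤ T := by
    intro z hz
    have hz : z.re = 0 := hz
    have hz' : star z = -z := by rw [hzz, hz]; simp
    let S := cp X hXp.1 ((-1/(2*s) : ℝ) : ℂ)
    let V := cp X hXp.1 (1/2 + ((1/(2*s) : ℝ) : ℂ) * z) * (G s)ᴴ * G z
    have hSs : Sᴴ = S := by simp only [S, cp_star]; simp
    have hSS : S * S = cp X hXp.1 ((-1/s : ℝ) : ℂ) := by
      simp only [S]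
      rw [← cp_add]; congr 1; push_cast; field_simp; ring
    have hGu : G z * (G z)ᴴ = 1 := by
      rw [hGs, hz']
      simp only [G]
      calc _ = cp B hB.1 (z/2) * (cp C hC.1 (-(z/2)) * (cp A hA.1 (z/2) *
        cp A hA.1 (-z/2)) * cp C hC.1 (-(-z/2))) * cp B hB.1 (-z/2) := by
            simp only [Matrix.mul_assoc]
        _ = 1 := by
          rw [show -z/2 = -(z/2) by ring, neg_neg, cp_mul_neg, mul_one, cp_neg_mul, mul_one,
            cp_mul_neg]
    have hVV : V * Vᴴ = 1 := by
      have : Vᴴ = (G z)ᴴ * (G s * cp X hXp.1 (1/2 - ((1/(2*s) : ℝ) : ℂ) * z)) := by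
        simp only [V, Matrix.conjTranspose_mul, cp_star, Matrix.conjTranspose_conjTranspose]
        congr 3
        simp only [star_add, star_mul', hz']
        simp
        ring
      rw [this]
      simp only [V]
      calc _ = cp X hXp.1 (1/2 + ((1/(2*s) : ℝ) : ℂ) * z) * ((G s)ᴴ * (G z * (G z)ᴴ) * G s) *
            cp X hXp.1 (1/2 - ((1/(2*s) : ℝ) : ℂ) * z) := by simp only [Matrix.mul_assoc]
        _ = 1 := by
          rw [hGu, mul_one, hGG, ← cp_add, ← cp_add, ← cp_zero X hXp.1]
          congr 1; ring
    have hfz : f z = (Sᴴ * (S * V)).trace := by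
      rw [hSs, ← Matrix.mul_assoc, hSS]
      have e : Z z = cp X hXp.1 ((-1/s : ℝ) : ℂ) * cp X hXp.1 (1/2 + ((1/(2*s) : ℝ) : ℂ) * z) := by
        simp only [Z]
        rw [← cp_add]
        congr 1
        push_cast; ring
      change (Z z * (G s)ᴴ * G z).trace = _
      rw [e]
      simp only [V, Matrix.mul_assoc]
    have hcs := hs_cs S (S * V)
    rw [← hfz] at hcs
    have t1 : (Sᴴ * S).trace.re = T := by rw [hSs, hSS, hT]; simp
    have t2 : ((S * V)ᴴ * (S * V)).trace.re = T := by
      rw [Matrix.trace_mul_comm, Matrix.conjTranspose_mul]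
      rw [show S * V * (Vᴴ * Sᴴ) = S * (V * Vᴴ) * Sᴴ by simp only [Matrix.mul_assoc], hVV,
        mul_one, hSs, hSS, hT]; simp
    rw [t1, t2] at hcs
    exact abs_le_of_sq_le_sq' (by nlinarith) hTpos.le |>.2
  -- right edge
  have hr : ∀ z ∈ Complex.re ⁻¹' {(1:ℝ)}, ‖f z‖ ≤ T ^ (1/2 : ℝ) := by
    intro z hz
    have hz : z.re = 1 := hz
    have hz' : star z = 2 - z := by rw [hzz, hz]; simp
    let P := G s * (Z z)ᴴ
    have hP : Pᴴ = Z z * (G s)ᴴ := by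
      simp only [P, Matrix.conjTranspose_mul, Matrix.conjTranspose_conjTranspose]
    have hfz : f z = (Pᴴ * G z).trace := by rw [hP]
    have hcs := hs_cs P (G z)
    rw [← hfz] at hcs
    have t1 : (Pᴴ * P).trace.re = T := by
      rw [hP]
      have : Z z * (G s)ᴴ * P = cp X hXp.1 ((-1/s : ℝ) : ℂ) := by
        simp only [P]
        rw [show Z z * (G s)ᴴ * (G s * (Z z)ᴴ) = Z z * ((G s)ᴴ * G s) * (Z z)ᴴ by
          simp only [Matrix.mul_assoc], hGG, hZs, hz']
        simp only [Z]
        rw [← cp_add, ← cp_add]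
        congr 1
        push_cast; field_simp; ring
      rw [this, hT]; simp
    have t2 : ((G z)ᴴ * G z).trace.re = 1 := by
      have h1 : cp A hA.1 (z/2) * cp A hA.1 (star z/2) = A := by
        rw [← cp_add, hz', show z/2 + (2 - z)/2 = 1 by ring, cp_one A hA]
      have h2 : cp B hB.1 (star z/2) * cp B hB.1 (z/2) = B := by
        rw [← cp_add, hz', show (2 - z)/2 + z/2 = 1 by ring, cp_one B hB]
      have : ((G z)ᴴ * G z).trace = 1 := by
        rw [hGs, ← htr z hz]
        simp only [G]
        rw [← Matrix.mul_assoc, Matrix.trace_mul_comm]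
        conv_rhs => rw [← h1, ← h2]
        simp only [Matrix.mul_assoc]
      rw [this]; simp
    rw [t1, t2, mul_one] at hcs
    rw [← Real.sqrt_eq_rpow]
    exact Real.le_sqrt_of_sq_le hcs
  have h3 := Complex.HadamardThreeLines.norm_le_interp_of_mem_verticalClosedStrip' (f := f)
    (z := (s : ℂ)) (a := T) (b := T ^ (1/2 : ℝ)) (l := 0) (u := 1) zero_lt_one
    ⟨by simpa using hs0.le, by simpa using hs1.le⟩ hf.1.diffContOnCl (by
      obtain ⟨C, hC⟩ := hf.2
      refine ⟨C, ?_⟩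
      rintro _ ⟨z, hz, rfl⟩
      exact hC z hz.1 hz.2) hl hr
  rw [hfs] at h3
  simp only [Complex.norm_real, Real.norm_eq_abs, abs_of_pos hTpos, Complex.ofReal_re, sub_zero,
    div_one] at h3
  rw [← Real.rpow_mul hTpos.le, ← Real.rpow_add hTpos] at h3
  have : T ≤ 1 := by
    by_contra hlt
    push Not at hlt
    have : T ^ (1 - s + 1/2 * s) < T ^ (1:ℝ) := Real.rpow_lt_rpow_of_exponent_lt hlt (by linarith)
    rw [Real.rpow_one] at this
    linarith
  exact_mod_cast this

end helpers

section reduced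
variable {dA dB dC : ℕ}
  (ρ : Matrix (Fin dA × Fin dB × Fin dC) (Fin dA × Fin dB × Fin dC) ℂ)

/-- The genuine reduced matrix on `C`. -/
noncomputable def rC : Matrix (Fin dC) (Fin dC) ℂ :=
  ∑ m : Fin dA, ∑ l : Fin dB, ρ.submatrix (fun c => (m, l, c)) (fun c => (m, l, c))

/-- The embedding of operators on `C`. -/
noncomputable def embC (dA dB dC : ℕ) : Matrix (Fin dC) (Fin dC) ℂ →ₐ[ℂ]
    Matrix (Fin dA × Fin dB × Fin dC) (Fin dA × Fin dB × Fin dC) ℂ :=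
  AlgHom.ofLinearMap
    { toFun := fun M => (1 : Matrix (Fin dA) (Fin dA) ℂ) ⊗ₖ ((1 : Matrix (Fin dB) (Fin dB) ℂ) ⊗ₖ M)
      map_add' := fun M N => by simp [Matrix.kronecker_add]
      map_smul' := fun c M => by simp [Matrix.kronecker_smul] }
    (by simp) (fun M N => by simp [← Matrix.mul_kronecker_mul])

lemma embC_apply (M : Matrix (Fin dC) (Fin dC) ℂ) : embC dA dB dC M =
    (1 : Matrix (Fin dA) (Fin dA) ℂ) ⊗ₖ ((1 : Matrix (Fin dB) (Fin dB) ℂ) ⊗ₖ M) := rfl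

lemma redC_eq : redC ρ = embC dA dB dC (rC ρ) := by
  ext ⟨a, b, c⟩ ⟨a', b', c'⟩
  simp [redC, embC_apply, rC, Matrix.kroneckerMap_apply, Matrix.one_apply, Matrix.sum_apply, mul_assoc]

lemma rC_posDef [NeZero dA] [NeZero dB] (hρ : ρ.PosDef) : (rC ρ).PosDef := by
  refine Matrix.posDef_sum ?_ fun m _ => Matrix.posDef_sum ?_ fun l _ => hρ.submatrix ?_
  · exact Finset.univ_nonempty
  · exact Finset.univ_nonempty
  · intro c c' h; simpa using h

lemma redC_posDef [NeZero dA] [NeZero dB] (hρ : ρ.PosDef) : (redC ρ).PosDef := by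
  rw [redC_eq, embC_apply]
  exact Matrix.PosDef.kronecker .one (Matrix.PosDef.kronecker .one (rC_posDef ρ hρ))

lemma redBC_posDef [NeZero dA] (hρ : ρ.PosDef) : (redBC ρ).PosDef := by
  have : redBC ρ = (1 : Matrix (Fin dA) (Fin dA) ℂ) ⊗ₖ
      (∑ m : Fin dA, ρ.submatrix (fun x => (m, x)) (fun x => (m, x))) := by
    ext ⟨a, b, c⟩ ⟨a', b', c'⟩
    simp [redBC, Matrix.kroneckerMap_apply, Matrix.one_apply, Matrix.sum_apply]
  rw [this]
  refine Matrix.PosDef.kronecker .one (Matrix.posDef_sum Finset.univ_nonempty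
    fun m _ => hρ.submatrix ?_)
  intro c c' h; simpa using h

lemma redAC_posDef [NeZero dB] (hρ : ρ.PosDef) : (redAC ρ).PosDef := by
  have : redAC ρ = ((1 : Matrix (Fin dB) (Fin dB) ℂ) ⊗ₖ
      (∑ m : Fin dB, ρ.submatrix (fun x : Fin dA × Fin dC => (x.1, m, x.2))
        (fun x => (x.1, m, x.2)))).submatrix
      (fun x : Fin dA × Fin dB × Fin dC => (x.2.1, (x.1, x.2.2))) (fun x => (x.2.1, (x.1, x.2.2))) := by
    ext ⟨a, b, c⟩ ⟨a', b', c'⟩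
    simp [redAC, Matrix.kroneckerMap_apply, Matrix.one_apply, Matrix.sum_apply]
  rw [this]
  refine (Matrix.PosDef.kronecker .one (Matrix.posDef_sum Finset.univ_nonempty
    fun m _ => hρ.submatrix ?_)).submatrix ?_
  · rintro ⟨a, c⟩ ⟨a', c'⟩ h; simpa using h
  · rintro ⟨a, b, c⟩ ⟨a', b', c'⟩ h
    simp at h ⊢; tauto

lemma trace_red (N M : Matrix (Fin dC) (Fin dC) ℂ) :
    (redAC ρ * embC dA dB dC N * redBC ρ * embC dA dB dC M).trace =
      (rC ρ * N * rC ρ * M).trace := by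
  have h1 : ∀ (a : Fin dA) b c a' b' c', (redAC ρ * embC dA dB dC N) (a, b, c) (a', b', c') =
      (if b = b' then 1 else 0) * ∑ c1, (∑ m, ρ (a, m, c) (a', m, c1)) * N c1 c' := by
    intro a b c a' b' c'
    simp [Matrix.mul_apply, redAC, embC_apply, Matrix.kroneckerMap_apply, Matrix.one_apply,
      Fintype.sum_prod_type, Finset.sum_ite_eq]
  have h2 : ∀ (a : Fin dA) b c a' b' c', (redBC ρ * embC dA dB dC M) (a, b, c) (a', b', c') =
      (if a = a' then 1 else 0) * ∑ c1, (∑ m, ρ (m, b, c) (m, b', c1)) * M c1 c' := by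
    intro a b c a' b' c'
    simp [Matrix.mul_apply, redBC, embC_apply, Matrix.kroneckerMap_apply, Matrix.one_apply,
      Fintype.sum_prod_type, Finset.sum_ite_eq]
  have h3 : ∀ c c', (rC ρ * N) c c' = ∑ a : Fin dA, ∑ c1, (∑ m, ρ (a, m, c) (a, m, c1)) * N c1 c' := by
    intro c c'
    simp only [Matrix.mul_apply, rC, Matrix.sum_apply, Matrix.submatrix_apply]
    rw [Finset.sum_comm]
    simp only [Finset.sum_mul]
  have h4 : ∀ c c', (rC ρ * M) c c' = ∑ b : Fin dB, ∑ c1, (∑ m, ρ (m, b, c) (m, b, c1)) * M c1 c' := by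
    intro c c'
    simp only [Matrix.mul_apply, rC, Matrix.sum_apply, Matrix.submatrix_apply]
    rw [Finset.sum_comm]
    refine Finset.sum_congr rfl fun c1 _ => ?_
    rw [← Finset.sum_mul, Finset.sum_comm]
  rw [Matrix.mul_assoc, Matrix.mul_assoc (rC ρ * N)]
  simp only [Matrix.trace, Matrix.diag]
  rw [Fintype.sum_prod_type]
  simp only [Fintype.sum_prod_type]
  simp only [Matrix.mul_apply (M := redAC ρ * _), Matrix.mul_apply (M := rC ρ * N),
    Fintype.sum_prod_type, h1, h2, h3, h4]
  generalize hF : (fun a a' c c' => ∑ c1, (∑ m, ρ (a, m, c) (a', m, c1)) * N c1 c') = F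
  generalize hH : (fun b b' c c' => ∑ c1, (∑ m, ρ (m, b, c) (m, b', c1)) * M c1 c') = H
  have eF : ∀ a a' c c', ∑ c1, (∑ m, ρ (a, m, c) (a', m, c1)) * N c1 c' = F a a' c c' := by
    intros; rw [← hF]
  have eH : ∀ b b' c c', ∑ c1, (∑ m, ρ (m, b, c) (m, b', c1)) * M c1 c' = H b b' c c' := by
    intros; rw [← hH]
  simp only [eF, eH]
  have : ∀ a b c, (∑ a' : Fin dA, ∑ b' : Fin dB, ∑ c', (if b = b' then 1 else 0) * F a a' c c' *
      ((if a' = a then 1 else 0) * H b' b c' c)) = ∑ c', F a a c c' * H b b c' c := by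
    intro a b c
    rw [Finset.sum_eq_single a, Finset.sum_eq_single b]
    · simp
    · intro b' _ hb; simp [hb.symm]
    · simp
    · intro a' _ ha; simp [ha]
    · simp
  simp only [this]
  simp only [Finset.sum_mul_sum]
  calc _ = ∑ a, ∑ c, ∑ b, ∑ c', F a a c c' * H b b c' c := by
        refine Finset.sum_congr rfl fun a _ => ?_
        rw [Finset.sum_comm]
    _ = ∑ c, ∑ a, ∑ b, ∑ c', F a a c c' * H b b c' c := by rw [Finset.sum_comm]
    _ = ∑ c, ∑ a, ∑ c', ∑ b, F a a c c' * H b b c' c := by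
        refine Finset.sum_congr rfl fun c _ => Finset.sum_congr rfl fun a _ => ?_
        rw [Finset.sum_comm]
    _ = _ := by
        refine Finset.sum_congr rfl fun c _ => ?_
        rw [Finset.sum_comm]

lemma trace_rC : (rC ρ).trace = ρ.trace := by
  simp only [Matrix.trace, Matrix.diag, rC, Matrix.sum_apply, Matrix.submatrix_apply,
    Fintype.sum_prod_type]
  rw [Finset.sum_comm]
  refine Finset.sum_congr rfl fun a _ => ?_
  rw [Finset.sum_comm]

end reduced

theorem stmt_8 {dA dB dC : ℕ}
    (ρ : Matrix (Fin dA × Fin dB × Fin dC) (Fin dA × Fin dB × Fin dC) ℂ)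
    (hρ : ρ.PosDef) (hρ1 : ρ.trace = 1)
    (α : ℝ) (hα : α ∈ Set.Ioi (1:ℝ)) :
    (mpow (mpow (redAC ρ) ((1 - α)/(2*α)) * mpow (redC ρ) ((α - 1)/(2*α)) *
        mpow (redBC ρ) ((1 - α)/α) * mpow (redC ρ) ((α - 1)/(2*α)) *
        mpow (redAC ρ) ((1 - α)/(2*α))) (α/(1 - α))).trace ≤ 1 := by
  have hne : Nonempty (Fin dA × Fin dB × Fin dC) := by
    by_contra h
    rw [not_nonempty_iff] at h
    simp [Matrix.trace] at hρ1
  obtain ⟨a, b, c⟩ := hne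
  have hne : Nonempty (Fin dA × Fin dB × Fin dC) := ⟨(a, b, c)⟩
  have : NeZero dA := ⟨by rintro rfl; exact a.elim0⟩
  have : NeZero dB := ⟨by rintro rfl; exact b.elim0⟩
  have hα1 : 1 < α := hα
  have hs0 : 0 < (α - 1)/α := div_pos (by linarith) (by linarith)
  have hs1 : (α - 1)/α < 1 := by rw [div_lt_one (by linarith)]; linarith
  have hα0 : α ≠ 0 := by linarith
  have hα2 : α - 1 ≠ 0 := by linarith
  have hα3 : 1 - α ≠ 0 := by linarith
  have key := interp_main (redAC ρ) (redBC ρ) (redC ρ) (redAC_posDef ρ hρ) (redBC_posDef ρ hρ)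
    (redC_posDef ρ hρ) (by
      intro z hz
      have hz' : star z = 2 - z := by
        apply Complex.ext <;> simp [hz]; norm_num
      have hC := rC_posDef ρ hρ
      rw [cp_algHom (rC ρ) hC.1 (embC dA dB dC) (redC ρ) _ (redC_eq ρ).symm,
        cp_algHom (rC ρ) hC.1 (embC dA dB dC) (redC ρ) _ (redC_eq ρ).symm, trace_red]
      have : rC ρ * cp (rC ρ) hC.1 (-(star z / 2)) * rC ρ * cp (rC ρ) hC.1 (-(z / 2)) = rC ρ := by
        have e : ∀ u v, cp (rC ρ) hC.1 1 * cp (rC ρ) hC.1 u * cp (rC ρ) hC.1 1 * cp (rC ρ) hC.1 v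
            = cp (rC ρ) hC.1 (1 + u + 1 + v) := by
          intro u v; rw [cp_add, cp_add, cp_add]
        have e2 := e (-(star z / 2)) (-(z / 2))
        rw [hz', show (1 : ℂ) + -((2 - z)/2) + 1 + -(z/2) = 1 by ring, cp_one _ hC] at e2
        rw [hz']
        exact e2
      rw [this, trace_rC, hρ1]) ((α - 1)/α) hs0 hs1
  have e1 : -((α - 1)/α)/2 = (1 - α)/(2*α) := by field_simp; ring
  have e2 : ((α - 1)/α)/2 = (α - 1)/(2*α) := by field_simp
  have e3 : -((α - 1)/α) = (1 - α)/α := by field_simp; ring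
  have e4 : -1/((α - 1)/α) = α/(1 - α) := by
    rw [div_div_eq_mul_div, div_eq_div_iff hα2 hα3]; ring
  rw [e1, e2, e3, e4] at key
  exact key
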